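/- As x → ∞, the number of integers n with 1 ≤ n ≤ x failing at least one of the following six conditions is o(x): (1) n > x/log x; (2) the largest squarefull divisor of n is at most log log x; (3) P⁺(n) > x^{1/(10 log log log x)}; (4) P⁺(n)² ∤ n; (5) gcd(n, σ(n)) has no prime factor exceeding log log x; (6) P⁺(n) > P₂⁺(n) · x^{1/(log log log x)²}, where P₂⁺(n) := P⁺(n / P⁺(n)) is the second-largest prime factor of n. -/

import Mathlib

open scoped Classical
open Filter Finset

/-- `sigma1 n` is `σ(n)`, the sum of all positive divisors of `n`. -/
def sigma1 (n : ℕ) : ℕ := ArithmeticFunction.sigma 1 n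

/-- `s n` is the sum of the proper divisors of `n`, i.e. `σ(n) − n`. -/
def s (n : ℕ) : ℕ := sigma1 n - n

/-- The largest prime factor of `n`, with the convention `Pplus 1 = 1`. -/
def Pplus (n : ℕ) : ℕ := if h : n.primeFactors.Nonempty then n.primeFactors.max' h else 1

/-- A positive integer `r` is squarefull if `p² ∣ r` for every prime `p ∣ r`. -/
def Squarefull (r : ℕ) : Prop := ∀ p : ℕ, p.Prime → p ∣ r → p ^ 2 ∣ r


lemma abel_bound (w g : ℕ → ℝ) (c : ℝ) (hw : ∀ J, ∑ j ∈ range J, w j ≤ c * J)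
    (A B : ℕ) (hAB : A ≤ B) (hg : ∀ j ≥ A, g (j+1) ≤ g j) (hg0 : ∀ j ≥ A, 0 ≤ g j)
    (hw0 : ∀ j, 0 ≤ w j) :
    ∑ j ∈ Ico A B, w j * g j ≤ c * (A * g A + ∑ j ∈ Ico A B, g j) := by
  have key : ∑ j ∈ Ico A B, w j * g j + (c * B - ∑ j ∈ range B, w j) * g B
      ≤ c * (A * g A + ∑ j ∈ Ico A B, g j) := by
    induction B, hAB using Nat.le_induction with
    | base =>
      have h1 : 0 ≤ ∑ j ∈ range A, w j := sum_nonneg fun j _ => hw0 j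
      have h2 := hg0 A le_rfl
      simp only [Ico_self, sum_empty]
      nlinarith [mul_nonneg h1 h2]
    | succ B hB ih =>
      rw [sum_Ico_succ_top hB, sum_Ico_succ_top hB]
      have h1 := hw (B+1)
      have h2 : (c * ((B+1 : ℕ):ℝ) - ∑ j ∈ range (B+1), w j) * g (B+1) ≤
        (c * ((B+1 : ℕ):ℝ) - ∑ j ∈ range (B+1), w j) * g B :=
        mul_le_mul_of_nonneg_left (hg B hB) (by linarith)
      rw [sum_range_succ] at h2 ⊢
      push_cast at h2 ⊢
      nlinarith
  have h1 := hw B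
  have h2 := hg0 B hAB
  nlinarith [mul_nonneg (sub_nonneg.2 h1) h2]

/-- Sparse families of exceptional predicates. -/
def Sparse (P : ℝ → ℕ → Prop) : Prop :=
  ∀ ε > 0, ∀ᶠ x : ℝ in atTop, (((Icc 1 ⌊x⌋₊).filter (P x)).card : ℝ) ≤ ε * x

lemma Sparse.or {P Q : ℝ → ℕ → Prop} (hP : Sparse P) (hQ : Sparse Q) :
    Sparse (fun x n => P x n ∨ Q x n) := by
  intro ε hε
  filter_upwards [hP (ε/2) (by positivity), hQ (ε/2) (by positivity)] with x h1 h2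
  have : (((Icc 1 ⌊x⌋₊).filter (fun n => P x n ∨ Q x n)).card : ℝ) ≤
      (((Icc 1 ⌊x⌋₊).filter (P x)).card : ℝ) + (((Icc 1 ⌊x⌋₊).filter (Q x)).card : ℝ) := by
    rw [filter_or]
    exact_mod_cast card_union_le _ _
  refine le_trans (le_of_eq ?_) (this.trans (by linarith : _ ≤ ε * x))
  congr!

lemma Sparse.mono {P Q : ℝ → ℕ → Prop} (hQ : Sparse Q)
    (h : ∀ᶠ x : ℝ in atTop, ∀ n ∈ Icc 1 ⌊x⌋₊, P x n → Q x n) : Sparse P := by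
  intro ε hε
  filter_upwards [hQ ε hε, h] with x h1 h2
  refine le_trans ?_ h1
  have : (Icc 1 ⌊x⌋₊).filter (P x) ⊆ (Icc 1 ⌊x⌋₊).filter (Q x) := by
    intro n hn
    rw [mem_filter] at hn ⊢
    exact ⟨hn.1, h2 n hn.1 hn.2⟩
  exact_mod_cast card_le_card this

lemma card_dvd_le {ι : Type*} (D : Finset ι) (f : ι → ℕ) (x : ℝ) (hx : 0 ≤ x)
    (P : ℕ → Prop) (h : ∀ n ∈ Icc 1 ⌊x⌋₊, P n → ∃ d ∈ D, f d ∣ n) :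
    (((Icc 1 ⌊x⌋₊).filter P).card : ℝ) ≤ x * ∑ d ∈ D, 1 / (f d : ℝ) := by
  have hsub : (Icc 1 ⌊x⌋₊).filter P ⊆ D.biUnion (fun d => (Ioc 0 ⌊x⌋₊).filter (fun n => f d ∣ n)) := by
    intro n hn
    rw [mem_filter] at hn
    obtain ⟨d, hd, hdn⟩ := h n hn.1 hn.2
    rw [mem_biUnion]
    refine ⟨d, hd, ?_⟩
    rw [mem_filter]
    refine ⟨?_, hdn⟩
    have := hn.1
    rw [mem_Icc] at this
    rw [mem_Ioc]; omega
  have h1 : ((Icc 1 ⌊x⌋₊).filter P).card ≤ ∑ d ∈ D, ⌊x⌋₊ / f d := by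
    refine (card_le_card hsub).trans (card_biUnion_le.trans (le_of_eq ?_))
    refine sum_congr rfl fun d _ => ?_
    rw [← Nat.Ioc_filter_dvd_card_eq_div]
  have h2 : (((Icc 1 ⌊x⌋₊).filter P).card : ℝ) ≤ ∑ d ∈ D, ((⌊x⌋₊ / f d : ℕ) : ℝ) := by
    exact_mod_cast h1
  refine h2.trans ?_
  rw [mul_sum]
  refine sum_le_sum fun d _ => ?_
  refine Nat.cast_div_le.trans ?_
  rw [mul_one_div]
  gcongr
  exact Nat.floor_le hx

/-- Weight `log m` on primes. -/
noncomputable def pw (m : ℕ) : ℝ := if m.Prime then Real.log m else 0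

lemma pw_nonneg (m : ℕ) : 0 ≤ pw m := by
  unfold pw; split_ifs
  · exact Real.log_natCast_nonneg m
  · exact le_rfl

lemma pw_sum (J : ℕ) : ∑ j ∈ range J, pw j ≤ Real.log 4 * J := by
  have h := Chebyshev.theta_le_log4_mul_x (x := (J : ℝ)) (by positivity)
  refine le_trans ?_ h
  rw [Chebyshev.theta_eq_sum_Icc, Nat.floor_natCast, sum_filter]
  refine (sum_le_sum_of_subset_of_nonneg (t := Icc 0 J) ?_ ?_).trans (le_of_eq ?_)
  · intro j hj; simp at hj ⊢; omega
  · intro j _ _; exact pw_nonneg j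
  · exact sum_congr rfl fun j _ => rfl


lemma ap_dvd (M a J : ℕ) :
    J.factorial ∣ M ^ J * ∏ j ∈ range J, (M * j + a) := by
  rw [Nat.dvd_iff_prime_pow_dvd_dvd]
  intro p k hp hk
  by_cases hpM : p ∣ M
  · rcases Nat.eq_zero_or_pos J with rfl | hJ
    · simpa using hk
    have := Fact.mk hp
    have h1 : k ≤ padicValNat p J.factorial :=
      (padicValNat_dvd_iff_le (Nat.factorial_ne_zero J)).1 hk
    have h2 := sub_one_mul_padicValNat_factorial_lt_of_ne_zero (p := p) hJ.ne'
    have h3 : 1 ≤ p - 1 := by have := hp.two_le; omega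
    have h4 : k ≤ J := by nlinarith
    exact Dvd.dvd.mul_right ((pow_dvd_pow_of_dvd hpM k).trans (pow_dvd_pow M h4)) _
  · have hco : Nat.Coprime M (p ^ k) := by
      apply Nat.Coprime.pow_right
      exact ((Nat.Prime.coprime_iff_not_dvd hp).2 hpM).symm
    have : NeZero (p ^ k) := ⟨pow_ne_zero _ hp.ne_zero⟩
    apply Dvd.dvd.mul_left
    rw [← ZMod.natCast_eq_zero_iff]
    set b : ℕ := ((M : ZMod (p^k))⁻¹ * a).val with hb
    have hb' : (b : ZMod (p^k)) = (M : ZMod (p^k))⁻¹ * a := by rw [hb, ZMod.natCast_zmod_val]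
    have hinv : (M : ZMod (p^k)) * (M : ZMod (p^k))⁻¹ = 1 := ZMod.coe_mul_inv_eq_one M hco
    have h0 : ((∏ j ∈ range J, (b + j) : ℕ) : ZMod (p^k)) = 0 := by
      rw [ZMod.natCast_eq_zero_iff, ← Nat.ascFactorial_eq_prod_range]
      exact hk.trans (Nat.factorial_dvd_ascFactorial _ _)
    have h1 : ((∏ j ∈ range J, (M * j + a) : ℕ) : ZMod (p^k)) =
        (M : ZMod (p^k))^J * ((∏ j ∈ range J, (b + j) : ℕ) : ZMod (p^k)) := by
      push_cast
      conv_rhs => rw [← card_range J, ← prod_const, card_range, ← prod_mul_distrib]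
      refine prod_congr rfl fun j _ => ?_
      rw [hb', mul_add, ← mul_assoc, hinv]; ring
    rw [h1, h0, mul_zero]

lemma ap_large (M a J : ℕ) (hM : Nat.Coprime a M) (hM1 : 1 ≤ M) (haM : a ≤ M) :
    ∑ j ∈ (range J).filter (fun j => (M * j + a).Prime ∧ J < M * j + a), Real.log ((M * j + a : ℕ) : ℝ)
      ≤ (2 * Real.log M + 1) * J := by
  set S := (range J).filter (fun j => (M * j + a).Prime ∧ J < M * j + a) with hS
  have hdiv : J.factorial * ∏ j ∈ S, (M * j + a) ∣ M ^ J * ∏ j ∈ range J, (M * j + a) := by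
    apply Nat.Coprime.mul_dvd_of_dvd_of_dvd
    · apply Nat.Coprime.prod_right
      intro j hj
      rw [hS, mem_filter] at hj
      exact ((Nat.Prime.coprime_iff_not_dvd hj.2.1).2
        (fun h => absurd ((Nat.Prime.dvd_factorial hj.2.1).1 h) (by omega))).symm
    · exact ap_dvd M a J
    · exact Dvd.dvd.mul_left (prod_dvd_prod_of_subset _ _ _ (filter_subset _ _)) _
  rcases Nat.eq_zero_or_pos J with rfl | hJ
  · simp [hS]
  have hSpos : ∀ j ∈ S, 0 < M * j + a := fun j hj => by
    rw [hS, mem_filter] at hj; exact hj.2.1.pos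
  have hbd : ∏ j ∈ range J, (M * j + a) ≤ (M * J) ^ J := by
    calc _ ≤ ∏ j ∈ range J, (M * J) := by
          apply prod_le_prod'
          intro j hj
          rw [mem_range] at hj
          nlinarith
      _ = _ := by simp
  have hposR : 0 < M ^ J * (M * J) ^ J := by positivity
  have hle : J.factorial * ∏ j ∈ S, (M * j + a) ≤ M ^ J * (M * J) ^ J := by
    rcases Nat.eq_zero_or_pos (∏ j ∈ range J, (M * j + a)) with h | h
    · -- a = 0, then M = 1
      rw [prod_eq_zero_iff] at h
      obtain ⟨j, _, hj⟩ := h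
      have ha : a = 0 := by omega
      have hM' : M = 1 := by simpa [ha] using hM
      subst ha; subst hM'
      have : S = ∅ := by
        rw [hS, filter_eq_empty_iff]
        intro j hj
        rw [mem_range] at hj; omega
      rw [this]
      simpa using Nat.factorial_le_pow J
    · exact (Nat.le_of_dvd (by positivity) hdiv).trans (Nat.mul_le_mul_left _ hbd)
  have hleR : (J.factorial : ℝ) * ∏ j ∈ S, ((M * j + a : ℕ) : ℝ) ≤ (M:ℝ) ^ J * (M * J) ^ J := by
    exact_mod_cast hle
  have hP : 0 < ∏ j ∈ S, ((M * j + a : ℕ) : ℝ) := prod_pos fun j hj => by exact_mod_cast hSpos j hj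
  have hexp := Real.pow_div_factorial_le_exp (J:ℝ) (by positivity) J
  have hF : (0:ℝ) < J.factorial := by exact_mod_cast J.factorial_pos
  rw [div_le_iff₀ hF] at hexp
  have hM0 : (0:ℝ) < M := by exact_mod_cast hM1
  have hfin : ∏ j ∈ S, ((M * j + a : ℕ) : ℝ) ≤ (M:ℝ) ^ (2*J) * Real.exp J := by
    have : (J.factorial : ℝ) * ∏ j ∈ S, ((M * j + a : ℕ) : ℝ) ≤
        J.factorial * ((M:ℝ) ^ (2*J) * Real.exp J) := by
      calc _ ≤ (M:ℝ) ^ J * (M * J) ^ J := hleR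
        _ = (M:ℝ)^(2*J) * (J:ℝ)^J := by rw [mul_pow]; ring
        _ ≤ (M:ℝ)^(2*J) * (Real.exp J * J.factorial) := by gcongr
        _ = _ := by ring
    exact le_of_mul_le_mul_left this hF
  rw [← Real.log_prod (fun j hj => by exact_mod_cast (hSpos j hj).ne')]
  calc _ ≤ Real.log ((M:ℝ) ^ (2*J) * Real.exp J) := Real.log_le_log hP hfin
    _ = _ := by
      rw [Real.log_mul (by positivity) (by positivity), Real.log_pow, Real.log_exp]
      push_cast; ring

lemma ap_theta (M a : ℕ) (hM : Nat.Coprime a M) (hM2 : 2 ≤ M) (haM : a ≤ M) (J : ℕ) :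
    ∑ j ∈ range J, pw (M * j + a) ≤ (3 * (2 * Real.log M + 1)) * J := by
  have hK : 0 ≤ 2 * Real.log M + 1 := by
    have := Real.log_natCast_nonneg M; linarith
  have ha : 1 ≤ a := by
    rcases Nat.eq_zero_or_pos a with rfl | h
    · have : M = 1 := by simpa using hM
      omega
    · exact h
  induction J using Nat.strong_induction_on with
  | _ J ih =>
    have hL := ap_large M a J hM (by omega) haM
    have hsplit : ∑ j ∈ range J, pw (M * j + a) ≤
        ∑ j ∈ (range J).filter (fun j => (M * j + a).Prime ∧ J < M * j + a), Real.log ((M * j + a : ℕ) : ℝ)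
        + ∑ j ∈ (range J).filter (fun j => M * j + a ≤ J), pw (M * j + a) := by
      rw [sum_filter, sum_filter, ← sum_add_distrib]
      refine sum_le_sum fun j _ => ?_
      have h1 := pw_nonneg (M*j+a)
      by_cases hp : (M*j+a).Prime
      · by_cases hJ : J < M * j + a
        · rw [if_pos ⟨hp, hJ⟩, if_neg (by omega)]; simp [pw, hp]
        · rw [if_neg (by tauto), if_pos (by omega)]; simp
      · simp [pw, hp]
    rcases Nat.lt_or_ge J 2 with h2 | h2
    · have : ∑ j ∈ (range J).filter (fun j => M * j + a ≤ J), pw (M * j + a) = 0 := by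
        apply sum_eq_zero
        intro j hj
        rw [mem_filter] at hj
        have : ¬ (M*j+a).Prime := fun h => by have := h.two_le; omega
        simp [pw, this]
      have hJ0 : (0:ℝ) ≤ J := by positivity
      nlinarith [mul_nonneg hK hJ0]
    · set J' := (J-1)/M + 1 with hJ'
      have hd : (J-1)/M ≤ (J-1)/2 := Nat.div_le_div_left hM2 (by norm_num)
      have hJJ : 3 * J' ≤ 2 * J := by omega
      have hlt : J' < J := by omega
      have := ih J' hlt
      have hsub : ∑ j ∈ (range J).filter (fun j => M * j + a ≤ J), pw (M * j + a) ≤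
          ∑ j ∈ range J', pw (M * j + a) := by
        apply sum_le_sum_of_subset_of_nonneg
        · intro j hj
          rw [mem_filter] at hj
          rw [mem_range, hJ', Nat.lt_succ_iff, Nat.le_div_iff_mul_le (by omega)]
          have : j * M = M * j := mul_comm _ _
          omega
        · intro j _ _; exact pw_nonneg _
      have hJJ' : 3 * (J':ℝ) ≤ 2 * J := by exact_mod_cast hJJ
      nlinarith [mul_le_mul_of_nonneg_left hJJ' hK]

lemma squarefull_sq (r : ℕ) (hr : 0 < r) (h : Squarefull r) : ∃ d, d ^ 2 ∣ r ∧ r ≤ d ^ 3 := by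
  obtain ⟨b, d, hbd, hb⟩ := Nat.sq_mul_squarefree r
  refine ⟨d, ⟨b, hbd.symm⟩, ?_⟩
  have hd0 : d ≠ 0 := by rintro rfl; simp at hbd; omega
  have hb0 : b ≠ 0 := hb.ne_zero
  have hdvd : b ∣ d := by
    rw [← Nat.prod_primeFactors_of_squarefree hb]
    apply Finset.prod_primes_dvd
    · intro p hp; exact (Nat.prime_of_mem_primeFactors hp).prime
    · intro p hp
      have hpp := Nat.prime_of_mem_primeFactors hp
      have hpb := Nat.dvd_of_mem_primeFactors hp
      have h2 := h p hpp (hbd ▸ hpb.mul_left _)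
      by_contra hpd
      have hc : Nat.Coprime (p^2) (d^2) := Nat.Coprime.pow 2 2 ((Nat.Prime.coprime_iff_not_dvd hpp).2 hpd)
      rw [← hbd] at h2
      have h3 := hc.dvd_of_dvd_mul_left h2
      rw [pow_two] at h3
      exact hpp.one_lt.ne' (Nat.isUnit_iff.1 (hb p h3))
  have := Nat.le_of_dvd (Nat.pos_of_ne_zero hd0) hdvd
  calc r = d^2 * b := hbd.symm
    _ ≤ d^2 * d := Nat.mul_le_mul_left _ this
    _ = d^3 := by ring

lemma exists_totient_small (ε : ℝ) (hε : 0 < ε) : ∃ W : ℕ, 1 ≤ W ∧ (Nat.totient W : ℝ) ≤ ε * W := by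
  have hdiv := not_summable_one_div_on_primes
  rw [not_summable_iff_tendsto_nat_atTop_of_nonneg] at hdiv
  swap
  · intro n; apply Set.indicator_nonneg; intro m _; positivity
  obtain ⟨n, hn⟩ := (hdiv.eventually_ge_atTop (-Real.log ε)).exists
  set S := (range n).filter Nat.Prime with hS
  have hsum : ∑ i ∈ range n, Set.indicator {p | Nat.Prime p} (fun n : ℕ => (1:ℝ) / n) i
      = ∑ p ∈ S, (1:ℝ)/p := by
    rw [hS, sum_filter]
    refine sum_congr rfl fun j _ => ?_
    simp [Set.indicator_apply]
  rw [hsum] at hn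
  have hSp : ∀ p ∈ S, p.Prime := fun p hp => (mem_filter.1 hp).2
  refine ⟨∏ p ∈ S, p, Nat.one_le_iff_ne_zero.2 (prod_ne_zero_iff.2 fun p hp => (hSp p hp).ne_zero), ?_⟩
  have hpf := Nat.primeFactors_prod hSp
  have h1 := Nat.totient_eq_mul_prod_factors (∏ p ∈ S, p)
  rw [hpf] at h1
  have h2 : ((Nat.totient (∏ p ∈ S, p) : ℕ) : ℝ) = ((∏ p ∈ S, p : ℕ) : ℝ) * ∏ p ∈ S, (1 - (p:ℝ)⁻¹) := by
    have := congrArg (fun q : ℚ => (q:ℝ)) h1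
    push_cast at this ⊢
    exact this
  rw [h2, mul_comm ε]
  refine mul_le_mul_of_nonneg_left ?_ (by positivity)
  calc ∏ p ∈ S, (1 - (p:ℝ)⁻¹) ≤ ∏ p ∈ S, Real.exp (-(1/(p:ℝ))) := by
        apply Finset.prod_le_prod
        · intro p hp
          have : (1:ℝ) ≤ p := by exact_mod_cast (hSp p hp).one_lt.le
          have := inv_le_one_of_one_le₀ this
          linarith
        · intro p hp
          have := Real.add_one_le_exp (-(1/(p:ℝ)))
          rw [one_div] at this ⊢
          linarith
    _ = Real.exp (-∑ p ∈ S, 1/(p:ℝ)) := by rw [← Real.exp_sum, sum_neg_distrib]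
    _ ≤ Real.exp (Real.log ε) := Real.exp_le_exp.2 (by linarith)
    _ = ε := Real.exp_log hε


lemma tele (f G : ℕ → ℝ) (A B : ℕ) (hAB : A ≤ B) (h : ∀ m ≥ A, f (m+1) ≤ G (m+1) - G m) :
    ∑ m ∈ Ico A (B+1), f m ≤ f A + G B - G A := by
  induction B, hAB using Nat.le_induction with
  | base => simp
  | succ B hB ih =>
    rw [sum_Ico_succ_top (by omega)]
    have := h B hB
    linarith

lemma inv_le_log_sub (m : ℕ) (hm : 1 ≤ m) :
    1 / ((m+1 : ℕ) : ℝ) ≤ Real.log ((m+1 : ℕ):ℝ) - Real.log m := by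
  have hm0 : (0:ℝ) < m := by exact_mod_cast hm
  have hm1 : (0:ℝ) < ((m+1:ℕ):ℝ) := by positivity
  have := Real.one_sub_inv_le_log_of_pos (x := ((m+1:ℕ):ℝ)/m) (by positivity)
  rw [Real.log_div hm1.ne' hm0.ne'] at this
  refine le_trans (le_of_eq ?_) this
  push_cast
  field_simp
  ring

lemma log_pos_nat (m : ℕ) (hm : 2 ≤ m) : 0 < Real.log m :=
  Real.log_pos (by exact_mod_cast hm)

lemma log_mono_nat (a b : ℕ) (ha : 1 ≤ a) (h : a ≤ b) : Real.log a ≤ Real.log b :=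
  Real.log_le_log (by exact_mod_cast ha) (by exact_mod_cast h)

lemma sum_inv_sq (A B : ℕ) (hA : 1 ≤ A) : ∑ m ∈ Ico A B, 1 / (m:ℝ)^2 ≤ (2:ℝ) / A := by
  have h := sum_Ioo_inv_sq_le (α := ℝ) (A-1) B
  have e : Ioo (A-1) B = Ico A B := by ext; simp; omega
  rw [e] at h
  have : ((A-1:ℕ):ℝ) + 1 = A := by
    rw [Nat.cast_sub hA]; push_cast; ring
  rw [this] at h
  simpa [one_div] using h

lemma sum_inv (A B : ℕ) (hA : 1 ≤ A) (hAB : A ≤ B) :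
    ∑ m ∈ Ico A (B+1), 1 / (m:ℝ) ≤ 1 / A + Real.log B - Real.log A :=
  tele (fun m => 1/(m:ℝ)) (fun m => Real.log m) A B hAB
    (fun m hm => inv_le_log_sub m (by omega))

lemma sum_inv_log_sq (A B : ℕ) (hA : 2 ≤ A) (hAB : A ≤ B) :
    ∑ m ∈ Ico A (B+1), 1 / ((m:ℝ) * Real.log m ^ 2) ≤ 1 / (A * Real.log A ^ 2) + 1 / Real.log A := by
  have h := tele (fun m : ℕ => 1 / ((m:ℝ) * Real.log m ^ 2)) (fun m => - (1 / Real.log m)) A B hAB ?_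
  · have : 0 < Real.log B := log_pos_nat B (by omega)
    have : 0 < 1 / Real.log B := by positivity
    linarith
  · intro m hm
    have h1 := inv_le_log_sub m (by omega)
    have l1 := log_pos_nat m (by omega)
    have l2 := log_pos_nat (m+1) (by omega)
    have l3 := log_mono_nat m (m+1) (by omega) (by omega)
    set u := Real.log m
    set v := Real.log ((m+1:ℕ):ℝ)
    have e : -(1/v) - -(1/u) = (v - u) / (u * v) := by field_simp; ring
    rw [e]
    calc 1 / (((m+1:ℕ):ℝ) * v^2) = (1/((m+1:ℕ):ℝ)) / (v * v) := by field_simp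
      _ ≤ (v-u)/(u*v) := by gcongr

lemma sum_inv_log (A B : ℕ) (hA : 2 ≤ A) (hAB : A ≤ B) :
    ∑ m ∈ Ico A (B+1), 1 / ((m:ℝ) * Real.log m) ≤
      1 / (A * Real.log A) + Real.log (Real.log B) - Real.log (Real.log A) := by
  refine tele (fun m : ℕ => 1 / ((m:ℝ) * Real.log m)) (fun m => Real.log (Real.log m)) A B hAB ?_
  intro m hm
  have h1 := inv_le_log_sub m (by omega)
  have l1 := log_pos_nat m (by omega)
  have l2 := log_pos_nat (m+1) (by omega)
  have h2 := Real.one_sub_inv_le_log_of_pos (x := Real.log ((m+1:ℕ):ℝ)/Real.log m) (by positivity)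
  rw [Real.log_div l2.ne' l1.ne'] at h2
  refine le_trans ?_ h2
  set u := Real.log m
  set v := Real.log ((m+1:ℕ):ℝ)
  have e : 1 - (v/u)⁻¹ = (v - u)/v := by field_simp
  rw [e]
  calc 1 / (((m+1:ℕ):ℝ) * v) = (1/((m+1:ℕ):ℝ)) / v := by field_simp
    _ ≤ (v-u)/v := by gcongr

lemma log4_le : Real.log 4 ≤ 5/3 := by
  have : Real.log 4 = 2 * Real.log 2 := by
    rw [show (4:ℝ) = 2^2 by norm_num, Real.log_pow]; norm_num
  have := Real.log_two_lt_d9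
  linarith

lemma log4_nonneg : 0 ≤ Real.log 4 := Real.log_nonneg (by norm_num)

lemma prime_sum_sq (A B : ℕ) (hA : 1 ≤ A) : ∑ p ∈ Ico A B, pw p * (1 / (p:ℝ)^2) ≤ (5:ℝ) / A := by
  have hA0 : (0:ℝ) < A := by exact_mod_cast hA
  rcases le_or_gt A B with hAB | hAB
  swap
  · rw [Ico_eq_empty (by omega), sum_empty]; positivity
  have h := abel_bound pw (fun m => 1 / (m:ℝ)^2) (Real.log 4) pw_sum A B hAB ?_ ?_ pw_nonneg
  · refine h.trans ?_
    have h2 := sum_inv_sq A B hA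
    have e : (A:ℝ) * (1/(A:ℝ)^2) = 1 / A := by field_simp
    rw [e]
    calc _ ≤ Real.log 4 * (1/A + 2/A) := mul_le_mul_of_nonneg_left (by linarith) log4_nonneg
      _ = (3 * Real.log 4) / A := by ring
      _ ≤ 5 / A := by gcongr; linarith [log4_le]
  · intro j hj
    have : (0:ℝ) < j := by exact_mod_cast (by omega : 0 < j)
    push_cast
    gcongr; linarith
  · intro j _; positivity

lemma prime_sum_inv (A B : ℕ) (hA : 1 ≤ A) (hAB : A ≤ B) :
    ∑ p ∈ Ico A (B+1), pw p * (1 / (p:ℝ)) ≤ 2 * (2 + Real.log B - Real.log A) := by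
  have hA0 : (1:ℝ) ≤ A := by exact_mod_cast hA
  have h := abel_bound pw (fun m => 1 / (m:ℝ)) (Real.log 4) pw_sum A (B+1) (by omega) ?_ ?_ pw_nonneg
  · refine h.trans ?_
    have h2 := sum_inv A B hA hAB
    have e : (A:ℝ) * (1/(A:ℝ)) = 1 := by field_simp
    rw [e]
    have h3 := log_mono_nat A B hA hAB
    have h4 : 1/(A:ℝ) ≤ 1 := by rw [div_le_one (by linarith)]; exact hA0
    have h5 : 0 ≤ ∑ m ∈ Ico A (B+1), 1 / (m:ℝ) := sum_nonneg fun _ _ => by positivity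
    have := log4_le
    have := log4_nonneg
    nlinarith
  · intro j hj
    have : (0:ℝ) < j := by exact_mod_cast (by omega : 0 < j)
    push_cast
    gcongr; linarith
  · intro j _; positivity

lemma one_le_log (m : ℕ) (hm : 3 ≤ m) : 1 ≤ Real.log m := by
  rw [Real.le_log_iff_exp_le (by positivity)]
  have : (3:ℝ) ≤ m := by exact_mod_cast hm
  linarith [Real.exp_one_lt_three]

lemma prime_sum_inv_log (A B : ℕ) (hA : 3 ≤ A) (hAB : A ≤ B) :
    ∑ p ∈ Ico A (B+1), pw p * (1 / ((p:ℝ) * Real.log p ^ 2)) ≤ 5 / Real.log A := by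
  have hA0 : (1:ℝ) ≤ A := by exact_mod_cast (by omega : 1 ≤ A)
  have hl := one_le_log A hA
  have h := abel_bound pw (fun m => 1 / ((m:ℝ) * Real.log m ^ 2)) (Real.log 4) pw_sum A (B+1)
    (by omega) ?_ ?_ pw_nonneg
  · refine h.trans ?_
    have h2 := sum_inv_log_sq A B (by omega) hAB
    have e : (A:ℝ) * (1/((A:ℝ) * Real.log A ^ 2)) = 1 / Real.log A ^ 2 := by field_simp
    rw [e]
    have h3 : 1 / Real.log A ^ 2 ≤ 1 / Real.log A := by
      apply one_div_le_one_div_of_le (by linarith); nlinarith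
    have h4 : 1 / ((A:ℝ) * Real.log A ^ 2) ≤ 1 / Real.log A := by
      apply one_div_le_one_div_of_le (by linarith); nlinarith [sq_nonneg (Real.log A)]
    calc _ ≤ Real.log 4 * (1 / Real.log A + (1 / Real.log A + 1 / Real.log A)) :=
          mul_le_mul_of_nonneg_left (by linarith) log4_nonneg
      _ = (3 * Real.log 4) / Real.log A := by ring
      _ ≤ 5 / Real.log A := by gcongr; linarith [log4_le]
  · intro j hj
    have : (0:ℝ) < j := by exact_mod_cast (by omega : 0 < j)
    have l1 := log_pos_nat j (by omega)
    have l2 := log_mono_nat j (j+1) (by omega) (by omega)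
    gcongr
    · exact_mod_cast Nat.le_succ j
  · intro j _; positivity

lemma ap_sum (M a B : ℕ) (hM : Nat.Coprime a M) (hM3 : 3 ≤ M) (haM : a ≤ M) (hB : 3 ≤ B) :
    ∑ j ∈ (Ico M (B+1)).filter (fun j => (M*j+a).Prime), 1 / ((M*j+a:ℕ):ℝ) ≤
      9 * Real.log M / M * (2 + Real.log (Real.log B)) := by
  have hM0 : (1:ℝ) ≤ M := by exact_mod_cast (by omega : 1 ≤ M)
  have hl := one_le_log M hM3
  have hlB := one_le_log B hB
  have hllB := Real.log_nonneg hlB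
  have hll := Real.log_nonneg hl
  rcases le_or_gt M B with hAB | hAB
  swap
  · rw [Ico_eq_empty (by omega)]; simp; positivity
  have h := abel_bound (fun j => pw (M*j+a)) (fun j => 1 / (M:ℝ) * (1 / ((j:ℝ) * Real.log j)))
    (3 * (2 * Real.log M + 1)) (ap_theta M a hM (by omega) haM) M (B+1)
    (by omega) ?_ ?_ (fun j => pw_nonneg _)
  · have h0 : ∑ j ∈ (Ico M (B+1)).filter (fun j => (M*j+a).Prime), 1 / ((M*j+a:ℕ):ℝ) ≤
       ∑ j ∈ Ico M (B+1), pw (M*j+a) * (1 / (M:ℝ) * (1 / ((j:ℝ) * Real.log j))) := by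
      rw [sum_filter]
      refine sum_le_sum fun j hj => ?_
      rw [mem_Ico] at hj
      split_ifs with hp
      · rw [pw, if_pos hp]
        have lj := log_pos_nat j (by omega)
        have hj0 : (0:ℝ) < j := by exact_mod_cast (by omega : 0 < j)
        have l2 := log_mono_nat j (M*j+a) (by omega) (by nlinarith)
        have l3 : (M:ℝ) * j ≤ ((M*j+a:ℕ):ℝ) := by exact_mod_cast Nat.le_add_right _ _
        have e : Real.log ((M*j+a:ℕ):ℝ) * (1 / (M:ℝ) * (1 / ((j:ℝ) * Real.log j)))
          = (Real.log ((M*j+a:ℕ):ℝ) / Real.log j) * (1 / (M * j)) := by field_simp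
        rw [e]
        have h1 : 1 ≤ Real.log ((M*j+a:ℕ):ℝ) / Real.log j := by rw [le_div_iff₀ lj]; linarith
        have h2 : 1 / ((M*j+a:ℕ):ℝ) ≤ 1 / (M * j) := one_div_le_one_div_of_le (by positivity) l3
        have h3 : (0:ℝ) ≤ 1 / (M * j) := by positivity
        nlinarith
      · exact mul_nonneg (pw_nonneg _) (by
          have := Real.log_natCast_nonneg j
          positivity)
    refine h0.trans (h.trans ?_)
    have h2 := sum_inv_log M B (by omega) hAB
    rw [← mul_sum]
    have e : (M:ℝ) * (1 / (M:ℝ) * (1/((M:ℝ) * Real.log M))) = 1 / M * (1 / Real.log M) := by field_simp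
    rw [e]
    have h3 : 1 / Real.log M ≤ 1 := by rw [div_le_one (by linarith)]; exact hl
    have h4 : 1 / ((M:ℝ) * Real.log M) ≤ 1 := by
      rw [div_le_one (by nlinarith)]; nlinarith
    have h5 : (0:ℝ) ≤ 1 / M := by positivity
    calc _ ≤ 3 * (2 * Real.log M + 1) * (1 / M * (2 + Real.log (Real.log B))) := by
          rw [← mul_add]
          refine mul_le_mul_of_nonneg_left (mul_le_mul_of_nonneg_left (by linarith) h5) (by linarith)
      _ ≤ 9 * Real.log M * (1 / M * (2 + Real.log (Real.log B))) := by
          refine mul_le_mul_of_nonneg_right (by linarith) (by positivity)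
      _ = _ := by ring
  · intro j hj
    have : (0:ℝ) < j := by exact_mod_cast (by omega : 0 < j)
    have l1 := log_pos_nat j (by omega)
    have l2 := log_mono_nat j (j+1) (by omega) (by omega)
    gcongr
    · exact_mod_cast Nat.le_succ j
  · intro j _
    have := Real.log_natCast_nonneg j
    positivity


lemma sum_le_inj {α β : Type*} (S : Finset α) (T : Finset β) (i : α → β) (f : α → ℝ) (g : β → ℝ)
    (hi : ∀ a ∈ S, i a ∈ T) (hinj : Set.InjOn i S) (hfg : ∀ a ∈ S, f a ≤ g (i a))
    (hg : ∀ b ∈ T, 0 ≤ g b) : ∑ a ∈ S, f a ≤ ∑ b ∈ T, g b := by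
  calc ∑ a ∈ S, f a ≤ ∑ a ∈ S, g (i a) := sum_le_sum hfg
    _ = ∑ b ∈ S.image i, g b := (sum_image hinj).symm
    _ ≤ ∑ b ∈ T, g b := by
      apply sum_le_sum_of_subset_of_nonneg
      · intro b hb
        obtain ⟨a, ha, rfl⟩ := mem_image.1 hb
        exact hi a ha
      · intro b hb _; exact hg b hb

lemma card_classes (p W : ℕ) (hp : p.Prime) (hW : 1 ≤ W) (hpW : W < p) :
    ((range (p*W)).filter (fun a => Nat.Coprime a (p*W) ∧ p ∣ a + 1)).card ≤ Nat.totient W := by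
  have hco : Nat.Coprime p W := (Nat.Prime.coprime_iff_not_dvd hp).2
    (fun h => absurd (Nat.le_of_dvd (by omega) h) (by omega))
  rw [Nat.totient_eq_card_coprime]
  apply card_le_card_of_injOn (fun a => a % W)
  · intro a ha
    simp only [coe_filter, mem_range, Set.mem_ofPred_eq] at ha ⊢
    refine ⟨Nat.mod_lt _ (by omega), ?_⟩
    have h1 : Nat.Coprime a W := Nat.Coprime.coprime_mul_left_right ha.2.1
    have h2 := Nat.gcd_rec W a
    rw [Nat.Coprime, Nat.gcd_comm] at h1
    show Nat.gcd _ _ = 1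
    rw [Nat.gcd_comm, ← h2]
    exact h1
  · intro a ha b hb hab
    simp only [coe_filter, mem_range, Set.mem_ofPred_eq] at ha hb hab
    have h1 : a ≡ b [MOD p] := by
      have h2 : a + 1 ≡ b + 1 [MOD p] :=
        ((Nat.modEq_zero_iff_dvd).2 ha.2.2).trans ((Nat.modEq_zero_iff_dvd).2 hb.2.2).symm
      exact Nat.ModEq.add_right_cancel' 1 h2
    have h3 := (Nat.modEq_and_modEq_iff_modEq_mul hco).1 ⟨h1, hab⟩
    exact Nat.ModEq.eq_of_lt_of_lt h3 ha.1 hb.1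

lemma class_sum_large (p W N : ℕ) (hp : p.Prime) (hp3 : 3 ≤ p) (hW : 1 ≤ W) (hpW : W < p) (hN : 3 ≤ N)
    (δ : ℝ) (hδ : (Nat.totient W : ℝ) ≤ δ * W) :
    ∑ q ∈ (Ico ((p*W)^2) (N+1)).filter (fun q => q.Prime ∧ p ∣ q + 1), 1 / (q:ℝ) ≤
      Real.log p / p * (18 * δ * (2 + Real.log (Real.log N))) := by
  set M := p * W with hM
  have hM3 : 3 ≤ M := by nlinarith
  set R := (range M).filter (fun a => Nat.Coprime a M ∧ p ∣ a + 1) with hR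
  have hll := Real.log_nonneg (one_le_log N hN)
  have hmaps : ∀ q ∈ (Ico (M^2) (N+1)).filter (fun q => q.Prime ∧ p ∣ q + 1), q % M ∈ R := by
    intro q hq
    rw [mem_filter, mem_Ico] at hq
    obtain ⟨⟨hq1, hq2⟩, hqp, hpq⟩ := hq
    rw [hR, mem_filter, mem_range]
    refine ⟨Nat.mod_lt _ (by omega), ?_, ?_⟩
    · have h1 : Nat.Coprime q M := (Nat.Prime.coprime_iff_not_dvd hqp).2 (fun h => by
        have := Nat.le_of_dvd (by omega) h
        nlinarith)
      rw [Nat.Coprime, ← Nat.gcd_rec]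
      exact h1.symm
    · have h2 : q % M + 1 ≡ q + 1 [MOD p] :=
        Nat.ModEq.add_right 1 ((Nat.mod_modEq q M).of_dvd ⟨W, hM⟩)
      exact (Nat.modEq_zero_iff_dvd).1 (h2.trans ((Nat.modEq_zero_iff_dvd).2 hpq))
  rw [← sum_fiberwise_of_maps_to hmaps]
  have hfib : ∀ a ∈ R, ∑ q ∈ ((Ico (M^2) (N+1)).filter (fun q => q.Prime ∧ p ∣ q + 1)).filter
      (fun q => q % M = a), 1 / (q:ℝ) ≤ 9 * Real.log M / M * (2 + Real.log (Real.log N)) := by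
    intro a ha
    rw [hR, mem_filter, mem_range] at ha
    refine le_trans ?_ (ap_sum M a N ha.2.1 hM3 ha.1.le hN)
    apply sum_le_inj _ _ (fun q => q / M)
    · intro q hq
      simp only [mem_filter, mem_Ico] at hq ⊢
      have e : M * (q/M) + a = q := by rw [← hq.2]; exact Nat.div_add_mod q M
      refine ⟨⟨?_, ?_⟩, ?_⟩
      · rw [Nat.le_div_iff_mul_le (by omega)]; nlinarith
      · exact lt_of_le_of_lt (Nat.div_le_self _ _) hq.1.1.2
      · rw [e]; exact hq.1.2.1
    · intro q hq q' hq' h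
      simp only [coe_filter, mem_filter, Set.mem_ofPred_eq] at hq hq' h
      rw [← Nat.div_add_mod q M, ← Nat.div_add_mod q' M, h, hq.2, hq'.2]
    · intro q hq
      simp only [mem_filter] at hq
      have e : M * (q/M) + a = q := by rw [← hq.2]; exact Nat.div_add_mod q M
      rw [e]
    · intro b _; positivity
  refine (sum_le_sum hfib).trans ?_
  rw [sum_const, nsmul_eq_mul]
  have hcard : (R.card : ℝ) ≤ δ * W := le_trans (by exact_mod_cast card_classes p W hp hW hpW) hδ
  have hW0 : (0:ℝ) < W := by exact_mod_cast hW
  have hp0 : (0:ℝ) < p := by exact_mod_cast hp.pos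
  have hlp := one_le_log p hp3
  have hlM : Real.log M ≤ 2 * Real.log p := by
    have : (M:ℝ) = p * W := by rw [hM]; push_cast; ring
    rw [this, Real.log_mul hp0.ne' hW0.ne']
    have := log_mono_nat W p hW hpW.le
    linarith
  have hMc : (M:ℝ) = p * W := by rw [hM]; push_cast; ring
  have hlM0 : 0 ≤ Real.log M := Real.log_natCast_nonneg M
  calc (R.card : ℝ) * (9 * Real.log M / M * (2 + Real.log (Real.log N)))
      ≤ (δ * W) * (9 * (2 * Real.log p) / M * (2 + Real.log (Real.log N))) := by
        have : 0 ≤ δ * W := (Nat.cast_nonneg _).trans hcard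
        gcongr
    _ = _ := by rw [hMc]; field_simp; ring

lemma class_sum_small (p W : ℕ) (hp3 : 3 ≤ p) (hpW : W < p) :
    ∑ q ∈ (range ((p*W)^2)).filter (fun q => q.Prime ∧ p ∣ q + 1), 1 / (q:ℝ) ≤
      Real.log p / p * 8 := by
  have hp0 : (0:ℝ) < p := by exact_mod_cast (by omega : 0 < p)
  have h : ∑ q ∈ (range ((p*W)^2)).filter (fun q => q.Prime ∧ p ∣ q + 1), 1 / (q:ℝ) ≤
      ∑ k ∈ Ico (1:ℕ) (p^3+1), 2 / (p:ℝ) * (1 / (k:ℝ)) := by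
    apply sum_le_inj _ _ (fun q => (q+1)/p)
    · intro q hq
      simp only [mem_filter, mem_range, mem_Ico] at hq ⊢
      obtain ⟨h1, h2, k, hk⟩ := hq
      rw [hk, Nat.mul_div_cancel_left _ (by omega)]
      refine ⟨?_, ?_⟩
      · rcases Nat.eq_zero_or_pos k with rfl | h
        · omega
        · exact h
      · have h3 : p * k ≤ p * p^3 := by
          calc p * k = q + 1 := hk.symm
            _ ≤ (p*W)^2 := h1
            _ ≤ (p*p)^2 := by gcongr
            _ = p * p^3 := by ring
        have := Nat.le_of_mul_le_mul_left h3 (by omega)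
        omega
    · intro q hq q' hq' h
      simp only [coe_filter, Set.mem_ofPred_eq] at hq hq' h
      have e1 := Nat.div_mul_cancel hq.2.2
      have e2 := Nat.div_mul_cancel hq'.2.2
      rw [h] at e1
      omega
    · intro q hq
      simp only [mem_filter, mem_range] at hq
      obtain ⟨h1, h2, k, hk⟩ := hq
      rw [hk, Nat.mul_div_cancel_left _ (by omega)]
      have hkR : (q:ℝ) + 1 = p * k := by exact_mod_cast hk
      have hq0 : (2:ℝ) ≤ q := by exact_mod_cast h2.two_le
      have hk0 : (0:ℝ) < k := by
        rcases Nat.eq_zero_or_pos k with rfl | h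
        · omega
        · exact_mod_cast h
      rw [div_mul_div_comm, div_le_div_iff₀ (by linarith) (by positivity)]
      linarith
    · intro k _; positivity
  refine h.trans ?_
  rw [← mul_sum]
  have h1 := sum_inv 1 (p^3) le_rfl (Nat.one_le_pow _ _ (by omega))
  have hl := one_le_log p hp3
  have e : Real.log ((p^3:ℕ):ℝ) = 3 * Real.log p := by push_cast; rw [Real.log_pow]; norm_num
  rw [e] at h1
  simp at h1
  calc _ ≤ 2 / (p:ℝ) * (4 * Real.log p) := by
        apply mul_le_mul_of_nonneg_left _ (by positivity)
        simp only [one_div]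
        linarith
    _ = _ := by ring

lemma class_sum (p W N : ℕ) (hp : p.Prime) (hp3 : 3 ≤ p) (hW : 1 ≤ W) (hpW : W < p) (hN : 3 ≤ N)
    (δ : ℝ) (hδ : (Nat.totient W : ℝ) ≤ δ * W) :
    ∑ q ∈ (range (N+1)).filter (fun q => q.Prime ∧ p ∣ q + 1), 1 / (q:ℝ) ≤
      Real.log p / p * (8 + 18 * δ * (2 + Real.log (Real.log N))) := by
  have h1 := class_sum_small p W hp3 hpW
  have h2 := class_sum_large p W N hp hp3 hW hpW hN δ hδ
  have h3 : (range (N+1)).filter (fun q => q.Prime ∧ p ∣ q + 1) ⊆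
    (range ((p*W)^2)).filter (fun q => q.Prime ∧ p ∣ q + 1) ∪
    (Ico ((p*W)^2) (N+1)).filter (fun q => q.Prime ∧ p ∣ q + 1) := by
    rw [← filter_union]
    apply filter_subset_filter
    intro q hq
    simp only [mem_union, mem_range, mem_Ico] at hq ⊢
    omega
  have h4 : ∑ q ∈ (range (N+1)).filter (fun q => q.Prime ∧ p ∣ q + 1), 1 / (q:ℝ) ≤
     ∑ q ∈ (range ((p*W)^2)).filter (fun q => q.Prime ∧ p ∣ q + 1), 1 / (q:ℝ) +
     ∑ q ∈ (Ico ((p*W)^2) (N+1)).filter (fun q => q.Prime ∧ p ∣ q + 1), 1 / (q:ℝ) := by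
    refine (sum_le_sum_of_subset_of_nonneg h3 (fun _ _ _ => by positivity)).trans ?_
    rw [← sum_union_inter]
    exact le_add_of_nonneg_right (sum_nonneg fun _ _ => by positivity)
  calc _ ≤ _ := h4
    _ ≤ _ := add_le_add h1 h2
    _ = _ := by ring

/-- The double sum controlling condition (5). -/
lemma double_sum (A W N : ℕ) (hA3 : 3 ≤ A) (hW : 1 ≤ W) (hAW : W < A) (hN : 3 ≤ N)
    (δ : ℝ) (hδ0 : 0 ≤ δ) (hδ : (Nat.totient W : ℝ) ≤ δ * W) :
    ∑ p ∈ (Ico A (N+1)).filter Nat.Prime,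
      ∑ q ∈ (range (N+1)).filter (fun q => q.Prime ∧ p ∣ q + 1), 1 / ((p * q : ℕ):ℝ) ≤
      5 / A * (8 + 18 * δ * (2 + Real.log (Real.log N))) := by
  have hll := Real.log_nonneg (one_le_log N hN)
  set K := 8 + 18 * δ * (2 + Real.log (Real.log N)) with hK
  have hK0 : 0 ≤ K := by positivity
  have h1 : ∀ p ∈ (Ico A (N+1)).filter Nat.Prime,
      ∑ q ∈ (range (N+1)).filter (fun q => q.Prime ∧ p ∣ q + 1), 1 / ((p * q : ℕ):ℝ) ≤
      pw p * (1 / (p:ℝ)^2) * K := by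
    intro p hp
    rw [mem_filter, mem_Ico] at hp
    have h := class_sum p W N hp.2 (by omega) hW (by omega) hN δ hδ
    have e : ∀ q : ℕ, 1 / ((p * q : ℕ):ℝ) = 1 / (p:ℝ) * (1 / (q:ℝ)) := by
      intro q; push_cast; rw [one_div_mul_one_div]
    simp only [e]
    rw [← mul_sum]
    calc _ ≤ 1 / (p:ℝ) * (Real.log p / p * K) := mul_le_mul_of_nonneg_left h (by positivity)
      _ = _ := by rw [pw, if_pos hp.2]; ring
  refine (sum_le_sum h1).trans ?_
  rw [← sum_mul]
  apply mul_le_mul_of_nonneg_right _ hK0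
  refine le_trans ?_ (prime_sum_sq A (N+1) (by omega))
  apply sum_le_sum_of_subset_of_nonneg (filter_subset _ _)
  intro p _ _
  exact mul_nonneg (pw_nonneg p) (by positivity)


lemma tendsto_l1 : Tendsto (fun x : ℝ => Real.log x) atTop atTop := Real.tendsto_log_atTop
lemma tendsto_l2 : Tendsto (fun x : ℝ => Real.log (Real.log x)) atTop atTop :=
  Real.tendsto_log_atTop.comp tendsto_l1
lemma tendsto_l3 : Tendsto (fun x : ℝ => Real.log (Real.log (Real.log x))) atTop atTop :=
  Real.tendsto_log_atTop.comp tendsto_l2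

lemma ev_l2_sq (K : ℝ) (hK : 0 < K) :
    ∀ᶠ x : ℝ in atTop, K * Real.log (Real.log x) ^ 2 ≤ Real.log x := by
  have h := (Real.isLittleO_pow_log_id_atTop (n := 2)).def (c := 1/K) (by positivity)
  have h2 := tendsto_l1.eventually h
  filter_upwards [h2, tendsto_l1.eventually_ge_atTop 0] with x hx h0
  simp only [id, Real.norm_eq_abs, abs_pow, sq_abs, abs_of_nonneg h0] at hx
  rw [div_mul_eq_mul_div, one_mul, le_div_iff₀ hK] at hx
  linarith

lemma ev_T (K : ℝ) (hK : 0 < K) :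
    ∀ᶠ x : ℝ in atTop, K * Real.log (Real.log x) ≤
      Real.log x / (10 * Real.log (Real.log (Real.log x))) := by
  filter_upwards [ev_l2_sq (10*K) (by positivity), tendsto_l2.eventually_ge_atTop 1,
    tendsto_l3.eventually_ge_atTop 1] with x h1 h2 h3
  rw [le_div_iff₀ (by linarith)]
  have h4 : Real.log (Real.log (Real.log x)) ≤ Real.log (Real.log x) := Real.log_le_self (by linarith)
  have : K * Real.log (Real.log x) * (10 * Real.log (Real.log (Real.log x))) ≤
     K * Real.log (Real.log x) * (10 * Real.log (Real.log x)) := by gcongr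
  nlinarith

lemma sparse1 : Sparse (fun x n => (n:ℝ) ≤ x / Real.log x) := by
  intro ε hε
  filter_upwards [tendsto_l1.eventually_ge_atTop (1/ε), eventually_ge_atTop 1] with x h1 h2
  have h0 : 0 < Real.log x := lt_of_lt_of_le (by positivity) h1
  have hsub : (Icc 1 ⌊x⌋₊).filter (fun n : ℕ => (n:ℝ) ≤ x / Real.log x) ⊆ Icc 1 ⌊x / Real.log x⌋₊ := by
    intro n hn
    rw [mem_filter, mem_Icc] at hn
    rw [mem_Icc]
    exact ⟨hn.1.1, Nat.le_floor hn.2⟩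
  have h3 : (((Icc 1 ⌊x⌋₊).filter (fun n : ℕ => (n:ℝ) ≤ x / Real.log x)).card : ℝ) ≤ ⌊x / Real.log x⌋₊ := by
    have := card_le_card hsub
    rw [Nat.card_Icc, Nat.add_sub_cancel] at this
    exact_mod_cast this
  have h4 : x / Real.log x ≤ ε * x := by
    rw [div_le_iff₀ h0]
    rw [div_le_iff₀ hε] at h1
    nlinarith
  exact h3.trans ((Nat.floor_le (by positivity)).trans h4)

lemma sparse2 : Sparse (fun x n => ∃ r : ℕ, Squarefull r ∧ r ∣ n ∧ Real.log (Real.log x) / 2 < r) := by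
  intro ε hε
  obtain ⟨A, hA⟩ := exists_nat_gt (2/ε)
  have hA0 : (0:ℝ) < A := lt_trans (by positivity) hA
  have hA1 : 1 ≤ A := by exact_mod_cast hA0
  filter_upwards [tendsto_l2.eventually_ge_atTop (2 * (A:ℝ)^3), eventually_ge_atTop 1] with x h1 h2
  refine (card_dvd_le (Ico A (⌊x⌋₊+1)) (fun d => d^2) x (by linarith) _ ?_).trans ?_
  · rintro n hn ⟨r, hr, hrn, hrx⟩
    rw [mem_Icc] at hn
    have hr0 : 0 < r := Nat.pos_of_dvd_of_pos hrn (by omega)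
    obtain ⟨d, hd, hrd⟩ := squarefull_sq r hr0 hr
    refine ⟨d, ?_, hd.trans hrn⟩
    rw [mem_Ico]
    constructor
    · by_contra hlt
      push Not at hlt
      have h3 : d^3 ≤ A^3 := Nat.pow_le_pow_left hlt.le 3
      have h4 : (r:ℝ) ≤ (A:ℝ)^3 := by exact_mod_cast hrd.trans h3
      linarith
    · have h3 := Nat.le_of_dvd (by omega) (hd.trans hrn)
      nlinarith
  · have h3 := sum_inv_sq A (⌊x⌋₊+1) hA1
    push_cast
    rw [mul_comm]
    apply mul_le_mul_of_nonneg_right _ (by linarith)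
    refine h3.trans ?_
    rw [div_le_iff₀ hA0]
    rw [div_lt_iff₀ hε] at hA
    linarith

lemma le_Pplus (n p : ℕ) (hn : n ≠ 0) (hp : p.Prime) (h : p ∣ n) : p ≤ Pplus n := by
  have hmem : p ∈ n.primeFactors := Nat.mem_primeFactors.2 ⟨hp, h, hn⟩
  unfold Pplus
  rw [dif_pos ⟨p, hmem⟩]
  exact le_max' _ _ hmem

lemma Pplus_mem (n : ℕ) (hn : 2 ≤ n) : (Pplus n).Prime ∧ Pplus n ∣ n := by
  have hne : n.primeFactors.Nonempty := Nat.nonempty_primeFactors.2 (by omega)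
  have h : Pplus n ∈ n.primeFactors := by
    unfold Pplus
    rw [dif_pos hne]
    exact max'_mem _ _
  exact ⟨Nat.prime_of_mem_primeFactors h, Nat.dvd_of_mem_primeFactors h⟩

lemma log_le_smooth (n N z : ℕ) (hn : 1 ≤ n) (hnN : n ≤ N) (hz : Pplus n ≤ z) :
    Real.log n ≤ ∑ p ∈ Ico 1 (z+1), ∑ k ∈ Ico 1 (N+1), pw p * (if p^k ∣ n then 1 else 0) := by
  rw [Real.log_nat_eq_sum_factorization, Finsupp.sum, Nat.support_factorization]
  have hsub : n.primeFactors ⊆ Ico 1 (z+1) := by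
    intro p hp
    have hpp := Nat.prime_of_mem_primeFactors hp
    have := le_Pplus n p (by omega) hpp (Nat.dvd_of_mem_primeFactors hp)
    rw [mem_Ico]
    exact ⟨hpp.pos, by omega⟩
  refine le_trans ?_ (sum_le_sum_of_subset_of_nonneg hsub ?_)
  · refine sum_le_sum fun p hp => ?_
    have hpp := Nat.prime_of_mem_primeFactors hp
    rw [← mul_sum, pw, if_pos hpp, mul_comm]
    apply mul_le_mul_of_nonneg_left _ (Real.log_natCast_nonneg p)
    rw [Nat.factorization_eq_card_pow_dvd n hpp, ← sum_filter, sum_const, nsmul_eq_mul, mul_one]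
    have : (Ico 1 n).filter (fun i => p^i ∣ n) ⊆ (Ico 1 (N+1)).filter (fun i => p^i ∣ n) := by
      apply filter_subset_filter
      apply Ico_subset_Ico le_rfl; omega
    have := card_le_card this
    exact_mod_cast this
  · intro p _ _
    refine sum_nonneg fun k _ => mul_nonneg (pw_nonneg p) ?_
    split_ifs <;> norm_num

lemma geom_bound (p N : ℕ) (hp : 2 ≤ p) : ∑ k ∈ Ico 1 (N+1), 1 / (p:ℝ)^k ≤ 2 / p := by
  have hp0 : (2:ℝ) ≤ p := by exact_mod_cast hp
  have key : ∀ N : ℕ, ∑ k ∈ Ico 1 (N+1), 1 / (p:ℝ)^k ≤ 2 / p - 2 * (1 / (p:ℝ)^(N+1)) := by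
    intro N
    induction N with
    | zero => simp [div_eq_mul_inv]
    | succ N ih =>
      rw [sum_Ico_succ_top (by omega)]
      have h1 : 2 * (1 / (p:ℝ)^(N+1+1)) ≤ 1 / (p:ℝ)^(N+1) := by
        rw [pow_succ (p:ℝ) (N+1), mul_one_div, div_le_div_iff₀ (by positivity) (by positivity)]
        have : 0 < (p:ℝ)^(N+1) := by positivity
        nlinarith
      linarith [h1]
  have : 0 < 1 / (p:ℝ)^(N+1) := by positivity
  linarith [key N]


lemma smooth_log_sum (x : ℝ) (z : ℕ) (hx : 0 ≤ x) (hz : 1 ≤ z) :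
    ∑ n ∈ (Icc 1 ⌊x⌋₊).filter (fun n => Pplus n ≤ z), Real.log n ≤ x * (8 + 4 * Real.log z) := by
  set N := ⌊x⌋₊ with hN
  have h1 : ∑ n ∈ (Icc 1 N).filter (fun n => Pplus n ≤ z), Real.log n ≤
      ∑ n ∈ Icc 1 N, ∑ p ∈ Ico 1 (z+1), ∑ k ∈ Ico 1 (N+1), pw p * (if p^k ∣ n then 1 else 0) := by
    refine le_trans (sum_le_sum (fun n hn => ?_)) (sum_le_sum_of_subset_of_nonneg (filter_subset _ _) ?_)
    · rw [mem_filter, mem_Icc] at hn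
      exact log_le_smooth n N z hn.1.1 hn.1.2 hn.2
    · intro n _ _
      refine sum_nonneg fun p _ => sum_nonneg fun k _ => mul_nonneg (pw_nonneg p) ?_
      split_ifs <;> norm_num
  refine h1.trans ?_
  rw [sum_comm]
  have h2 : ∀ p ∈ Ico 1 (z+1), ∑ n ∈ Icc 1 N, ∑ k ∈ Ico 1 (N+1), pw p * (if p^k ∣ n then (1:ℝ) else 0)
      ≤ x * 2 * (pw p * (1 / (p:ℝ))) := by
    intro p _
    by_cases hp : p.Prime
    swap
    · simp [pw, hp]
    rw [sum_comm]
    have h3 : ∀ k ∈ Ico 1 (N+1), ∑ n ∈ Icc 1 N, pw p * (if p^k ∣ n then (1:ℝ) else 0) ≤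
        pw p * x * (1 / (p:ℝ)^k) := by
      intro k _
      rw [← mul_sum, mul_assoc]
      apply mul_le_mul_of_nonneg_left _ (pw_nonneg p)
      rw [← sum_filter, sum_const, nsmul_eq_mul, mul_one]
      have := card_dvd_le ({p^k} : Finset ℕ) id x hx (fun n => p^k ∣ n) (by simp)
      simp only [id, sum_singleton] at this
      push_cast at this
      refine le_trans (le_of_eq ?_) this
      congr!
    refine (sum_le_sum h3).trans ?_
    rw [← mul_sum]
    have h4 := geom_bound p N hp.two_le
    calc _ ≤ pw p * x * (2 / p) := mul_le_mul_of_nonneg_left h4 (mul_nonneg (pw_nonneg p) hx)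
      _ = _ := by ring
  refine (sum_le_sum h2).trans ?_
  rw [← mul_sum]
  have h5 := prime_sum_inv 1 z le_rfl hz
  simp only [Nat.cast_one, Real.log_one] at h5
  calc _ ≤ x * 2 * (2 * (2 + Real.log z - 0)) := mul_le_mul_of_nonneg_left h5 (by positivity)
    _ = _ := by ring

lemma sparse3 : Sparse (fun x n => x / Real.log x < n ∧
    (Pplus n : ℝ) ≤ x ^ (1 / (10 * Real.log (Real.log (Real.log x))))) := by
  intro ε hε
  filter_upwards [tendsto_l1.eventually_ge_atTop (32/ε), tendsto_l3.eventually_ge_atTop (2/ε),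
    tendsto_l2.eventually_ge_atTop 1, tendsto_l3.eventually_ge_atTop 1, ev_l2_sq 2 (by norm_num),
    eventually_ge_atTop 1, tendsto_l1.eventually_ge_atTop 1] with x h1 h2 h3 h4 h5 h6 h7
  set L3 := Real.log (Real.log (Real.log x)) with hL3
  set T := x ^ (1 / (10 * L3)) with hT
  have hx0 : 0 < x := by linarith
  have hT1 : 1 ≤ T := Real.one_le_rpow h6 (by positivity)
  have hz1 : 1 ≤ ⌊T⌋₊ := Nat.le_floor (by simpa using hT1)
  have hs := smooth_log_sum x ⌊T⌋₊ hx0.le hz1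
  set S := (Icc 1 ⌊x⌋₊).filter (fun n : ℕ => x / Real.log x < n ∧ (Pplus n : ℝ) ≤ T) with hS
  have hlogT : Real.log T = Real.log x / (10 * L3) := by
    rw [hT, Real.log_rpow hx0]; ring
  have hlogz : Real.log ⌊T⌋₊ ≤ Real.log x / (10 * L3) := by
    rw [← hlogT]
    exact Real.log_le_log (by exact_mod_cast hz1) (Nat.floor_le (by linarith))
  have hlow : (S.card : ℝ) * (Real.log x / 2) ≤
      ∑ n ∈ (Icc 1 ⌊x⌋₊).filter (fun n => Pplus n ≤ ⌊T⌋₊), Real.log n := by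
    calc (S.card : ℝ) * (Real.log x / 2) = ∑ n ∈ S, Real.log x / 2 := by simp
      _ ≤ ∑ n ∈ S, Real.log n := by
        refine sum_le_sum fun n hn => ?_
        rw [hS, mem_filter] at hn
        have := Real.log_le_log (by positivity) hn.2.1.le
        rw [Real.log_div (by linarith) (by linarith)] at this
        nlinarith
      _ ≤ _ := by
        apply sum_le_sum_of_subset_of_nonneg
        · intro n hn
          rw [hS, mem_filter] at hn
          rw [mem_filter]
          exact ⟨hn.1, Nat.le_floor hn.2.2⟩
        · intro n _ _; exact Real.log_natCast_nonneg n
  have hmain : (S.card : ℝ) * (Real.log x / 2) ≤ (ε * x) * (Real.log x / 2) := by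
    refine hlow.trans (hs.trans ?_)
    have e1 : 8 ≤ ε / 4 * Real.log x := by
      rw [div_le_iff₀ hε] at h1; linarith
    have e2 : 4 * (Real.log x / (10 * L3)) ≤ ε / 4 * Real.log x := by
      rw [div_le_iff₀ hε] at h2
      rw [mul_div_assoc', div_le_iff₀ (by positivity)]
      nlinarith
    calc x * (8 + 4 * Real.log ⌊T⌋₊) ≤ x * (ε / 4 * Real.log x + ε / 4 * Real.log x) := by
          apply mul_le_mul_of_nonneg_left _ hx0.le
          linarith
      _ = _ := by ring
  have := le_of_mul_le_mul_right hmain (by linarith)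
  refine le_trans (le_of_eq ?_) this
  congr!

lemma sparse5 : Sparse (fun x n => ∃ p q : ℕ, p.Prime ∧ q.Prime ∧ p * q ∣ n ∧ p ∣ q + 1 ∧
    Real.log (Real.log x) < p) := by
  intro ε hε
  set δ := ε / 200 with hδ
  have hδ0 : 0 < δ := by positivity
  obtain ⟨W, hW1, hW⟩ := exists_totient_small δ hδ0
  filter_upwards [tendsto_l2.eventually_ge_atTop 3, tendsto_l2.eventually_ge_atTop ((W:ℝ)+1),
    tendsto_l2.eventually_ge_atTop ((40 + 180 * δ) / (ε/2)), eventually_ge_atTop 3] with x h1 h2 h3 h4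
  set y := Real.log (Real.log x) with hy
  set N := ⌊x⌋₊ with hN
  have hN3 : 3 ≤ N := Nat.le_floor (by simpa using h4)
  have hNx : (N:ℝ) ≤ x := Nat.floor_le (by linarith)
  have hyA : y ≤ ⌈y⌉₊ := Nat.le_ceil y
  have hA3 : 3 ≤ ⌈y⌉₊ := by
    have : (3:ℝ) ≤ ⌈y⌉₊ := by linarith
    exact_mod_cast this
  have hAW : W < ⌈y⌉₊ := by
    have : (W:ℝ) < ⌈y⌉₊ := by linarith
    exact_mod_cast this
  have hd := double_sum ⌈y⌉₊ W N hA3 hW1 hAW hN3 δ hδ0.le hW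
  have hcard := card_dvd_le
    (((Ico ⌈y⌉₊ (N+1)).filter Nat.Prime).sigma
      (fun p => (range (N+1)).filter (fun q => q.Prime ∧ p ∣ q + 1)))
    (fun d => d.1 * d.2) x (by linarith)
    (fun n => ∃ p q : ℕ, p.Prime ∧ q.Prime ∧ p * q ∣ n ∧ p ∣ q + 1 ∧ y < p) ?_
  swap
  · rintro n hn ⟨p, q, hp, hq, hpq, hpq1, hyp⟩
    rw [mem_Icc] at hn
    have hle := Nat.le_of_dvd (by omega) hpq
    have := hp.two_le
    have := hq.two_le
    refine ⟨⟨p, q⟩, ?_, hpq⟩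
    simp only [mem_sigma, mem_filter, mem_Ico, mem_range]
    refine ⟨⟨⟨Nat.ceil_le.2 hyp.le, ?_⟩, hp⟩, ?_, hq, hpq1⟩
    · nlinarith
    · nlinarith
  rw [sum_sigma] at hcard
  refine hcard.trans ?_
  rw [mul_comm]
  apply mul_le_mul_of_nonneg_right _ (by linarith)
  refine hd.trans ?_
  have hllN : Real.log (Real.log N) ≤ y := by
    apply Real.log_le_log
    · linarith [one_le_log N hN3]
    · exact Real.log_le_log (by exact_mod_cast (by omega : 0 < N)) hNx
  have hy0 : 0 < y := by linarith
  have hll := Real.log_nonneg (one_le_log N hN3)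
  calc 5 / (⌈y⌉₊:ℝ) * (8 + 18 * δ * (2 + Real.log (Real.log N)))
      ≤ 5 / y * (8 + 18 * δ * (2 + y)) := by gcongr
    _ = (40 + 180 * δ) / y + 90 * δ := by field_simp; ring
    _ ≤ ε / 2 + 90 * δ := by
      have h9 : (40 + 180 * δ) / y ≤ ε / 2 := by
        rw [div_le_iff₀ (by positivity)] at h3
        rw [div_le_iff₀ hy0]; linarith
      linarith
    _ ≤ ε := by rw [hδ]; linarith

lemma close_sum (A N : ℕ) (X : ℝ) (hA : 3 ≤ A) (hX : 1 ≤ X) (hXA : 2 * Real.log X ≤ Real.log A) :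
    ∑ p ∈ (Ico A (N+1)).filter Nat.Prime,
      ∑ q ∈ (range p).filter (fun q : ℕ => q.Prime ∧ (p:ℝ) ≤ q * X), 1 / ((p * q : ℕ):ℝ) ≤
      20 * (2 + Real.log X) / Real.log A := by
  have hlX := Real.log_nonneg hX
  have hlA := one_le_log A hA
  rcases le_or_gt A N with hAN | hAN
  swap
  · rw [Ico_eq_empty (by omega)]; simp; positivity
  have h1 : ∀ p ∈ (Ico A (N+1)).filter Nat.Prime,
      ∑ q ∈ (range p).filter (fun q : ℕ => q.Prime ∧ (p:ℝ) ≤ q * X), 1 / ((p * q : ℕ):ℝ) ≤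
      4 * (2 + Real.log X) * (pw p * (1 / ((p:ℝ) * Real.log p ^ 2))) := by
    intro p hp
    rw [mem_filter, mem_Ico] at hp
    have hp0 : (0:ℝ) < p := by exact_mod_cast hp.2.pos
    have hlp := log_mono_nat A p (by omega) hp.1.1
    have hX0 : 0 < X := by linarith
    set B := ⌈(p:ℝ)/X⌉₊ with hB
    have hB1 : 1 ≤ B := Nat.one_le_ceil_iff.2 (by positivity)
    have hBp : B ≤ p := Nat.ceil_le.2 (div_le_self hp0.le hX)
    have hlB : Real.log p - Real.log X ≤ Real.log B := by
      rw [← Real.log_div hp0.ne' hX0.ne']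
      exact Real.log_le_log (by positivity) (Nat.le_ceil _)
    have hin : ∑ q ∈ (range p).filter (fun q : ℕ => q.Prime ∧ (p:ℝ) ≤ q * X), 1 / ((p * q : ℕ):ℝ) ≤
        ∑ q ∈ Ico B (p+1), 2 / (p * Real.log p) * (pw q * (1 / (q:ℝ))) := by
      refine le_trans (sum_le_sum (g := fun q => 2 / (p * Real.log p) * (pw q * (1 / (q:ℝ)))) ?_)
        (sum_le_sum_of_subset_of_nonneg ?_ ?_)
      · intro q hq
        rw [mem_filter, mem_range] at hq
        obtain ⟨hqp, hq1, hq2⟩ := hq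
        have hBq : B ≤ q := Nat.ceil_le.2 (by rw [div_le_iff₀ hX0]; exact hq2)
        have hlq := log_mono_nat B q hB1 hBq
        have hq0 : (0:ℝ) < q := by exact_mod_cast hq1.pos
        rw [pw, if_pos hq1]
        have e : 2 / (p * Real.log p) * (Real.log q * (1 / (q:ℝ))) =
          (2 * Real.log q / Real.log p) * (1 / (p * q)) := by field_simp
        rw [e]
        push_cast
        have h2 : 1 ≤ 2 * Real.log q / Real.log p := by
          rw [le_div_iff₀ (by linarith)]; linarith
        have h3 : 0 ≤ 1 / ((p:ℝ) * q) := by positivity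
        nlinarith
      · intro q hq
        rw [mem_filter, mem_range] at hq
        rw [mem_Ico]
        exact ⟨Nat.ceil_le.2 (by rw [div_le_iff₀ hX0]; exact hq.2.2), by omega⟩
      · intro q _ _
        have := pw_nonneg q
        have : 0 ≤ Real.log p := by linarith
        positivity
    refine hin.trans ?_
    rw [← mul_sum]
    have h4 := prime_sum_inv B p hB1 hBp
    have hlp0 : 0 < Real.log p := by linarith
    calc _ ≤ 2 / (p * Real.log p) * (2 * (2 + Real.log X)) := by
          apply mul_le_mul_of_nonneg_left _ (by positivity)
          linarith
      _ = _ := by rw [pw, if_pos hp.2]; field_simp; ring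
  refine (sum_le_sum h1).trans ?_
  rw [← mul_sum]
  have h5 := prime_sum_inv_log A N hA hAN
  have h6 : ∑ p ∈ (Ico A (N+1)).filter Nat.Prime, pw p * (1 / ((p:ℝ) * Real.log p ^ 2)) ≤
      5 / Real.log A := by
    refine le_trans (sum_le_sum_of_subset_of_nonneg (filter_subset _ _) ?_) h5
    intro q _ _
    exact mul_nonneg (pw_nonneg q) (by positivity)
  calc _ ≤ 4 * (2 + Real.log X) * (5 / Real.log A) := mul_le_mul_of_nonneg_left h6 (by positivity)
    _ = _ := by ring

lemma sparse6 : Sparse (fun x n => ∃ p q : ℕ, p.Prime ∧ q.Prime ∧ q < p ∧ p * q ∣ n ∧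
    x ^ (1 / (10 * Real.log (Real.log (Real.log x)))) < p ∧
    (p:ℝ) ≤ q * x ^ (1 / (Real.log (Real.log (Real.log x))) ^ 2)) := by
  intro ε hε
  filter_upwards [tendsto_l3.eventually_ge_atTop 20, tendsto_l3.eventually_ge_atTop (400/ε),
    tendsto_l2.eventually_ge_atTop 2, ev_T 1 (by norm_num), ev_T (80/ε) (by positivity),
    eventually_ge_atTop 1, tendsto_l1.eventually_ge_atTop 1] with x h1 h2 h3 h4 h5 h6 h7
  set L3 := Real.log (Real.log (Real.log x)) with hL3
  set T := x ^ (1 / (10 * L3)) with hT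
  set X := x ^ (1 / L3 ^ 2) with hX
  set N := ⌊x⌋₊ with hN
  have hx0 : 0 < x := by linarith
  have hlogT : Real.log T = Real.log x / (10 * L3) := by
    rw [hT, Real.log_rpow hx0]; ring
  have hlogX : Real.log X = Real.log x / L3 ^ 2 := by
    rw [hX, Real.log_rpow hx0]; ring
  have hT0 : 0 < T := Real.rpow_pos_of_pos hx0 _
  have hX1 : 1 ≤ X := Real.one_le_rpow h6 (by positivity)
  have hlT2 : 2 ≤ Real.log T := by rw [hlogT]; linarith
  have hT3 : 3 ≤ T := by
    have := Real.add_one_le_exp (Real.log T)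
    rw [Real.exp_log hT0] at this
    linarith
  have hTA : T ≤ ⌈T⌉₊ := Nat.le_ceil T
  have hA3 : 3 ≤ ⌈T⌉₊ := by
    have : (3:ℝ) ≤ ⌈T⌉₊ := by linarith
    exact_mod_cast this
  have hlA : Real.log T ≤ Real.log ⌈T⌉₊ := Real.log_le_log hT0 hTA
  have hXT : 2 * Real.log X ≤ Real.log T := by
    rw [hlogX, hlogT, mul_div_assoc', div_le_div_iff₀ (by positivity) (by positivity)]
    have : 0 ≤ Real.log x * L3 := by positivity
    nlinarith
  have hc := close_sum ⌈T⌉₊ N X hA3 hX1 (by linarith)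
  have hcard := card_dvd_le
    (((Ico ⌈T⌉₊ (N+1)).filter Nat.Prime).sigma
      (fun p => (range p).filter (fun q : ℕ => q.Prime ∧ (p:ℝ) ≤ q * X)))
    (fun d => d.1 * d.2) x (by linarith)
    (fun n => ∃ p q : ℕ, p.Prime ∧ q.Prime ∧ q < p ∧ p * q ∣ n ∧ T < p ∧ (p:ℝ) ≤ q * X) ?_
  swap
  · rintro n hn ⟨p, q, hp, hq, hqp, hpq, hTp, hpX⟩
    rw [mem_Icc] at hn
    have hle := Nat.le_of_dvd (by omega) hpq
    have := hp.two_le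
    have := hq.two_le
    refine ⟨⟨p, q⟩, ?_, hpq⟩
    simp only [mem_sigma, mem_filter, mem_Ico, mem_range]
    refine ⟨⟨⟨Nat.ceil_le.2 hTp.le, ?_⟩, hp⟩, hqp, hq, hpX⟩
    nlinarith
  rw [sum_sigma] at hcard
  refine hcard.trans ?_
  rw [mul_comm]
  apply mul_le_mul_of_nonneg_right _ (by linarith)
  refine hc.trans ?_
  have hlX := Real.log_nonneg hX1
  have hlT0 : 0 < Real.log T := by linarith
  have e1 : 40 / Real.log T ≤ ε / 2 := by
    rw [div_le_iff₀ hlT0, hlogT]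
    have : 80/ε * 1 ≤ 80/ε * Real.log (Real.log x) := by gcongr; linarith
    have h8 : 80 / ε ≤ Real.log x / (10*L3) := by linarith
    rw [div_le_iff₀ hε] at h8
    linarith
  have e2 : 20 * Real.log X / Real.log T ≤ ε / 2 := by
    have : 20 * Real.log X / Real.log T = 200 / L3 := by
      rw [hlogX, hlogT]; field_simp; ring
    rw [this, div_le_iff₀ (by linarith)]
    rw [div_le_iff₀ hε] at h2
    linarith
  calc 20 * (2 + Real.log X) / Real.log ⌈T⌉₊ ≤ 20 * (2 + Real.log X) / Real.log T := by gcongr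
    _ = 40 / Real.log T + 20 * Real.log X / Real.log T := by ring
    _ ≤ ε := by linarith


lemma Pplus_one : Pplus 1 = 1 := by simp [Pplus]

lemma squarefull_prime_pow (q v : ℕ) (hq : q.Prime) (hv : 2 ≤ v) : Squarefull (q ^ v) := by
  intro p hp hpq
  have : p = q := (Nat.prime_dvd_prime_iff_eq hp hq).1 (hp.dvd_of_dvd_pow hpq)
  subst this
  exact pow_dvd_pow _ hv

lemma sigma_prime_pow_lt (q v : ℕ) (hq : q.Prime) :
    ArithmeticFunction.sigma 1 (q ^ v) < 2 * q ^ v := by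
  rw [ArithmeticFunction.sigma_one_apply_prime_pow hq, Finset.sum_range_succ]
  have := Nat.geomSum_lt (m := q) (n := v) (s := range v) hq.two_le (by simp)
  omega

/-- A prime dividing `σ(n)` divides `σ(q^v)` for some prime power `q^v` exactly dividing `n`. -/
lemma exists_prime_pow_of_dvd_sigma (n p : ℕ) (hn : n ≠ 0) (hp : p.Prime) (h : p ∣ sigma1 n) :
    ∃ q v : ℕ, q.Prime ∧ 1 ≤ v ∧ q ^ v ∣ n ∧ p ∣ ArithmeticFunction.sigma 1 (q ^ v) := by
  unfold sigma1 at h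
  rw [ArithmeticFunction.isMultiplicative_sigma.multiplicative_factorization _ hn,
    Finsupp.prod, Prime.dvd_finsetProd_iff hp.prime] at h
  obtain ⟨q, hq, hpq⟩ := h
  rw [Nat.support_factorization, Nat.mem_primeFactors] at hq
  exact ⟨q, n.factorization q, hq.1, (hq.1.dvd_iff_one_le_factorization hn).1 hq.2.1,
    Nat.ordProj_dvd n q, hpq⟩

lemma bad_cover : ∀ᶠ x : ℝ in atTop, ∀ n ∈ Icc 1 ⌊x⌋₊,
    ¬ ((x / Real.log x < (n : ℝ)) ∧
          (∀ r : ℕ, Squarefull r → r ∣ n → (r : ℝ) ≤ Real.log (Real.log x)) ∧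
          (x ^ (1 / (10 * Real.log (Real.log (Real.log x)))) < (Pplus n : ℝ)) ∧
          (¬ Pplus n ^ 2 ∣ n) ∧
          (∀ p : ℕ, p.Prime → p ∣ Nat.gcd n (sigma1 n) → (p : ℝ) ≤ Real.log (Real.log x)) ∧
          ((Pplus (n / Pplus n) : ℝ) * x ^ (1 / (Real.log (Real.log (Real.log x))) ^ 2)
            < (Pplus n : ℝ))) →
    ((n:ℝ) ≤ x / Real.log x ∨
      (∃ r : ℕ, Squarefull r ∧ r ∣ n ∧ Real.log (Real.log x) / 2 < r) ∨
      (x / Real.log x < n ∧ (Pplus n:ℝ) ≤ x ^ (1/(10 * Real.log (Real.log (Real.log x))))) ∨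
      (∃ p q : ℕ, p.Prime ∧ q.Prime ∧ p * q ∣ n ∧ p ∣ q + 1 ∧ Real.log (Real.log x) < p) ∨
      (∃ p q : ℕ, p.Prime ∧ q.Prime ∧ q < p ∧ p * q ∣ n ∧
        x ^ (1/(10 * Real.log (Real.log (Real.log x)))) < p ∧
        (p:ℝ) ≤ q * x ^ (1 / (Real.log (Real.log (Real.log x))) ^ 2))) := by
  filter_upwards [tendsto_l2.eventually_ge_atTop 3, tendsto_l3.eventually_ge_atTop 10,
    ev_T 1 one_pos, eventually_ge_atTop 1] with x h2 h3 hT hx n hn hbad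
  set L2 := Real.log (Real.log x) with hL2
  set L3 := Real.log L2 with hL3
  have hx0 : 0 < x := by linarith
  have hTL : L2 + 1 ≤ x ^ (1 / (10 * L3)) := by
    rw [Real.rpow_def_of_pos hx0]
    refine le_trans ?_ (Real.add_one_le_exp _)
    rw [mul_one_div]; linarith
  have hXT : x ^ (1 / L3 ^ 2) ≤ x ^ (1 / (10 * L3)) := by
    apply Real.rpow_le_rpow_of_exponent_le hx
    apply one_div_le_one_div_of_le (by linarith)
    nlinarith
  by_contra hcon
  simp only [not_or] at hcon
  obtain ⟨b1, b2, b3, b5, b6⟩ := hcon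
  apply hbad
  have hn1 : 1 ≤ n := (mem_Icc.1 hn).1
  have hn0 : n ≠ 0 := by omega
  have c1 : x / Real.log x < n := not_le.1 b1
  have b2' : ∀ r : ℕ, Squarefull r → r ∣ n → (r:ℝ) ≤ L2 / 2 := fun r h h' =>
    not_lt.1 fun h'' => b2 ⟨r, h, h', h''⟩
  have c3 : x ^ (1 / (10 * L3)) < (Pplus n : ℝ) := not_le.1 fun h => b3 ⟨c1, h⟩
  have hn2 : 2 ≤ n := by
    by_contra h
    have : n = 1 := by omega
    rw [this, Pplus_one] at c3
    push_cast at c3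
    linarith
  obtain ⟨hP, hPn⟩ := Pplus_mem n hn2
  have c4 : ¬ Pplus n ^ 2 ∣ n := by
    intro h
    have := b2' _ (squarefull_prime_pow _ 2 hP le_rfl) h
    push_cast at this
    nlinarith
  refine ⟨c1, fun r h h' => by linarith [b2' r h h'], c3, c4, ?_, ?_⟩
  · intro p hp hpg
    by_contra hlt
    push Not at hlt
    have hpn : p ∣ n := hpg.trans (Nat.gcd_dvd_left _ _)
    obtain ⟨q, v, hq, hv, hqn, hpq⟩ :=
      exists_prime_pow_of_dvd_sigma n p hn0 hp (hpg.trans (Nat.gcd_dvd_right _ _))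
    rcases Nat.lt_or_ge v 2 with hv2 | hv2
    · have hv1 : v = 1 := by omega
      subst hv1
      rw [ArithmeticFunction.sigma_one_apply_prime_pow hq] at hpq
      simp [Finset.sum_range_succ] at hpq
      rw [pow_one] at hqn
      have hne : p ≠ q := by
        rintro rfl
        have : p ∣ 1 := by
          have := (Nat.dvd_sub hpq (dvd_refl p))
          simpa using this
        exact hp.one_lt.ne' (Nat.dvd_one.1 this)
      refine b5 ⟨p, q, hp, hq, ?_, by rwa [add_comm], hlt⟩
      exact Nat.Coprime.mul_dvd_of_dvd_of_dvd ((Nat.coprime_primes hp hq).2 hne) hpn hqn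
    · have hr := b2' _ (squarefull_prime_pow q v hq hv2) hqn
      have hs := sigma_prime_pow_lt q v hq
      have hpos : 0 < ArithmeticFunction.sigma 1 (q ^ v) := by
        rw [ArithmeticFunction.sigma_one_apply_prime_pow hq, Finset.sum_range_succ]
        have := pow_pos hq.pos v
        omega
      have hle := Nat.le_of_dvd hpos hpq
      have : (p:ℝ) < 2 * (q ^ v : ℕ) := by exact_mod_cast lt_of_le_of_lt hle hs
      linarith
  · by_contra hle
    push Not at hle
    obtain ⟨m, hm⟩ := hPn
    have hdiv : n / Pplus n = m := Nat.div_eq_of_eq_mul_right hP.pos hm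
    rw [hdiv] at hle
    have hm0 : m ≠ 0 := by rintro rfl; simp at hm; omega
    rcases Nat.lt_or_ge m 2 with hm2 | hm2
    · have hm1 : m = 1 := by omega
      rw [hm1, Pplus_one] at hle
      push_cast at hle
      linarith
    · obtain ⟨hQ, hQm⟩ := Pplus_mem m hm2
      have hdvd : Pplus n * Pplus m ∣ n := by
        have := mul_dvd_mul_left (Pplus n) hQm
        rwa [← hm] at this
      have hQP : Pplus m ≤ Pplus n :=
        le_Pplus n _ hn0 hQ ((dvd_mul_left _ _).trans hdvd)
      have hne : Pplus m ≠ Pplus n := by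
        intro h
        rw [h, ← sq] at hdvd
        exact c4 hdvd
      exact b6 ⟨Pplus n, Pplus m, hP, hQ, lt_of_le_of_ne hQP hne, hdvd, c3, hle⟩

theorem exceptional_set_is_sparse :
    (fun x : ℝ => (((Finset.Icc 1 ⌊x⌋₊).filter
        (fun n : ℕ => ¬ ((x / Real.log x < (n : ℝ)) ∧
          (∀ r : ℕ, Squarefull r → r ∣ n → (r : ℝ) ≤ Real.log (Real.log x)) ∧
          (x ^ (1 / (10 * Real.log (Real.log (Real.log x)))) < (Pplus n : ℝ)) ∧
          (¬ Pplus n ^ 2 ∣ n) ∧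
          (∀ p : ℕ, p.Prime → p ∣ Nat.gcd n (sigma1 n) → (p : ℝ) ≤ Real.log (Real.log x)) ∧
          ((Pplus (n / Pplus n) : ℝ) * x ^ (1 / (Real.log (Real.log (Real.log x))) ^ 2)
            < (Pplus n : ℝ))))).card : ℝ))
      =o[atTop] (fun x : ℝ => x) := by
  have hall := (sparse1.or (sparse2.or (sparse3.or (sparse5.or sparse6)))).mono bad_cover
  rw [Asymptotics.isLittleO_iff]
  intro c hc
  filter_upwards [hall c hc, eventually_ge_atTop 0] with x h hx
  rw [Real.norm_of_nonneg (Nat.cast_nonneg _), Real.norm_of_nonneg hx]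
  refine le_trans (le_of_eq ?_) h
  congr!
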